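/- arXiv:1108.3367 — 8 statements merged into one kernel-verified Lean document; each statement's English description precedes it below -/
import Mathlib

section
/- Let p, p₀, p₀', q₀, q₀' be complex numbers with p ≠ 0, q₀ ≠ 0, q₀' ≠ 0, and define the coefficient sequences a_{n+1} = p·n + p₀, a'_n = p·n + p₀', b_{n+1} = q₀, b'_n = q₀' (the class D⁼₁₀: degree-1 numerators with equal leading coefficients, constant denominators). Suppose X : ℕ → ℂ satisfies the tail recurrence (b'_n·b_{n+1} + a_{n+1})·X_n + b'_n·X_n·X_{n+1} − a'_n·X_{n+1} − a'_n·b_{n+1} = 0 for all n ≥ 1, and there exist complex numbers τ₋₂, τ₋₁, τ₀, τ₁ such that X_n = τ₋₂·n + τ₋₁·n^{1/2} + τ₀ + τ₁·n^{−1/2} + O(n^{−1}) as n → ∞. Then τ₋₂ = 0, q₀'·τ₋₁² = q₀·p (so in particular τ₋₁ ≠ 0), and τ₀ = (2p₀' − 2q₀'·q₀ + p − 2p₀)/(4q₀'). -/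
open Asymptotics Filter

/-- `n^s` as a complex number, for `n : ℕ` and a real exponent `s`. -/
noncomputable def rpowC (s : ℝ) (n : ℕ) : ℂ := (((n : ℝ) ^ s : ℝ) : ℂ)

open Topology

lemma rpowC_half (n : ℕ) : rpowC (1 / 2) n = (√(n : ℝ) : ℂ) := by
  rw [rpowC, Real.sqrt_eq_rpow]

lemma rpowC_neg_half (n : ℕ) : rpowC (-(1 / 2)) n = ((√(n : ℝ) : ℝ) : ℂ)⁻¹ := by
  rw [rpowC, Real.rpow_neg n.cast_nonneg, Real.sqrt_eq_rpow, Complex.ofReal_inv]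

lemma tendsto_inv_sqrt_natCast : Tendsto (fun n : ℕ => (√(n : ℝ))⁻¹) atTop (𝓝 0) :=
  tendsto_inv_atTop_zero.comp (Real.tendsto_sqrt_atTop.comp tendsto_natCast_atTop_atTop)

lemma tendsto_sqrt_div_sqrt_succ :
    Tendsto (fun n : ℕ => √(n : ℝ) / √((n + 1 : ℕ) : ℝ)) atTop (𝓝 1) := by
  have h := (Real.continuous_sqrt.tendsto _).comp (tendsto_natCast_div_add_atTop (1 : ℝ))
  rw [Real.sqrt_one] at h
  refine h.congr fun n => ?_
  simp [Real.sqrt_div]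

lemma tendsto_sqrt_succ_sub_sqrt_mul_sqrt :
    Tendsto (fun n : ℕ => (√((n + 1 : ℕ) : ℝ) - √(n : ℝ)) * √(n : ℝ)) atTop (𝓝 (1 / 2)) := by
  have h := tendsto_sqrt_div_sqrt_succ.div (tendsto_sqrt_div_sqrt_succ.const_add 1) (by norm_num)
  rw [one_add_one_eq_two] at h
  refine h.congr fun n => ?_
  have ht : 0 < √((n + 1 : ℕ) : ℝ) := by positivity
  have hs : 0 ≤ √(n : ℝ) := by positivity
  have hsq : √((n + 1 : ℕ) : ℝ) ^ 2 = √(n : ℝ) ^ 2 + 1 := by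
    rw [Real.sq_sqrt (by positivity), Real.sq_sqrt (by positivity)]
    push_cast
    ring
  simp only [Pi.div_apply]
  field_simp
  linear_combination -√(n : ℝ) * hsq

/-- An expansion of `X` in powers of `√n` up to `n^{-1/2}`, rewritten for two consecutive terms as
polynomials in `e = 1/√n` and `e⁻¹` with convergent coefficients. -/
lemma exists_consecutive_expansion (X : ℕ → ℂ) (A B C D : ℂ)
    (hX : (fun n : ℕ => X n - (A * n + B * rpowC (1 / 2) n + C + D * rpowC (-(1 / 2)) n))
      =O[atTop] fun n : ℕ => (n : ℝ) ^ (-(1 : ℝ))) :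
    ∃ e u v w : ℕ → ℂ, Tendsto e atTop (𝓝 0) ∧ Tendsto u atTop (𝓝 D) ∧ Tendsto v atTop (𝓝 D) ∧
      Tendsto w atTop (𝓝 (1 / 2)) ∧ ∀ n : ℕ, 1 ≤ n → e n ≠ 0 ∧ (n : ℂ) = (e n)⁻¹ ^ 2 ∧
        X n = A * (e n)⁻¹ ^ 2 + B * (e n)⁻¹ + C + u n * e n ∧
        X (n + 1) = A * ((e n)⁻¹ ^ 2 + 1) + B * ((e n)⁻¹ + w n * e n) + C + v n * e n := by
  set s : ℕ → ℂ := fun n => (√(n : ℝ) : ℂ) with hs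
  have hs0 : ∀ n : ℕ, 1 ≤ n → s n ≠ 0 := fun n hn => by
    have : (0 : ℝ) < n := by exact_mod_cast hn
    exact Complex.ofReal_ne_zero.2 (Real.sqrt_pos.2 this).ne'
  have hsq : ∀ n : ℕ, s n ^ 2 = n := fun n => by
    simp only [hs]
    exact_mod_cast congrArg Complex.ofReal (Real.sq_sqrt (n.cast_nonneg (α := ℝ)))
  have he : Tendsto (fun n => (s n)⁻¹) atTop (𝓝 0) := by
    simpa [hs, Function.comp_def] using
      (Complex.continuous_ofReal.tendsto 0).comp tendsto_inv_sqrt_natCast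
  have hu : Tendsto (fun n => (X n - A * n - B * s n - C) * s n) atTop (𝓝 D) := by
    have h0 : Tendsto (fun n : ℕ => (X n - (A * n + B * rpowC (1 / 2) n + C
        + D * rpowC (-(1 / 2)) n)) * s n) atTop (𝓝 0) := by
      have hsO : s =O[atTop] fun n : ℕ => √(n : ℝ) :=
        IsBigO.of_bound 1 (Eventually.of_forall fun n => by simp [hs])
      refine (hX.mul hsO).trans_tendsto (tendsto_inv_sqrt_natCast.congr fun n => ?_)
      rw [Real.rpow_neg_one, ← div_eq_inv_mul, Real.sqrt_div_self', one_div]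
    have h1 := h0.add_const D
    rw [zero_add] at h1
    refine h1.congr' ?_
    filter_upwards [eventually_ge_atTop 1] with n hn
    rw [rpowC_half, rpowC_neg_half]
    change (X n - (A * n + B * s n + C + D * (s n)⁻¹)) * s n + D = _
    field_simp [hs0 n hn]
    ring
  have hr : Tendsto (fun n => s n / s (n + 1)) atTop (𝓝 1) := by
    simpa [hs, Function.comp_def] using
      (Complex.continuous_ofReal.tendsto 1).comp tendsto_sqrt_div_sqrt_succ
  have hw : Tendsto (fun n => (s (n + 1) - s n) * s n) atTop (𝓝 (1 / 2)) := by
    simpa [hs, Function.comp_def] using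
      (Complex.continuous_ofReal.tendsto (1 / 2)).comp tendsto_sqrt_succ_sub_sqrt_mul_sqrt
  refine ⟨fun n => (s n)⁻¹, _,
    fun n => (X (n + 1) - A * (n + 1 : ℕ) - B * s (n + 1) - C) * s n, _, he, hu, ?_, hw, ?_⟩
  · have h := (hu.comp (tendsto_add_atTop_nat 1)).mul hr
    rw [mul_one] at h
    refine h.congr fun n => ?_
    have := hs0 (n + 1) (by omega)
    simp only [Function.comp_apply]
    field_simp
  · intro n hn
    have := hs0 n hn
    refine ⟨inv_ne_zero this, ?_, ?_, ?_⟩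
    · rw [inv_inv, hsq]
    · simp only [inv_inv, hsq]
      field_simp
      ring
    · simp only [inv_inv, hsq]
      push_cast
      field_simp
      ring

/-- Class D⁼₁₀: the tail expansion of a two-variant continued fraction with
`a_{n+1} = p n + p₀`, `a'_n = p n + p₀'`, `b_{n+1} = q₀`, `b'_n = q₀'` has
`τ₋₂ = 0`, `q₀' τ₋₁² = q₀ p` (so `τ₋₁ ≠ 0`) and the stated value of `τ₀`. -/
theorem stmt0 (p p₀ p₀' q₀ q₀' : ℂ) (hp : p ≠ 0) (hq₀ : q₀ ≠ 0) (hq₀' : q₀' ≠ 0)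
    (a a' b b' : ℕ → ℂ)
    (ha : ∀ n : ℕ, a (n + 1) = p * n + p₀)
    (ha' : ∀ n : ℕ, a' n = p * n + p₀')
    (hb : ∀ n : ℕ, b (n + 1) = q₀)
    (hb' : ∀ n : ℕ, b' n = q₀')
    (X : ℕ → ℂ)
    (hrec : ∀ n : ℕ, 1 ≤ n →
      (b' n * b (n + 1) + a (n + 1)) * X n + b' n * X n * X (n + 1)
        - a' n * X (n + 1) - a' n * b (n + 1) = 0)
    (τm2 τm1 τ0 τ1 : ℂ)
    (hX : (fun n : ℕ => X n
        - (τm2 * n + τm1 * rpowC (1 / 2) n + τ0 + τ1 * rpowC (-(1 / 2)) n))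
      =O[atTop] fun n : ℕ => (n : ℝ) ^ (-(1 : ℝ))) :
    τm2 = 0 ∧ q₀' * τm1 ^ 2 = q₀ * p ∧ τm1 ≠ 0 ∧
      τ0 = (2 * p₀' - 2 * q₀' * q₀ + p - 2 * p₀) / (4 * q₀') := by
  obtain ⟨e, u, v, w, he, hu, hv, hw, h⟩ := exists_consecutive_expansion X τm2 τm1 τ0 τ1 hX
  -- a polynomial in the convergent quantities that vanishes along the sequence vanishes at the limit
  have key : ∀ F : ℂ × ℂ × ℂ × ℂ → ℂ, Continuous F →
      (∀ n : ℕ, 1 ≤ n → F (e n, u n, v n, w n) = 0) → F (0, τ1, τ1, 1 / 2) = 0 := by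
    intro F hF hz
    have hlim := (hF.tendsto _).comp (he.prodMk_nhds (hu.prodMk_nhds (hv.prodMk_nhds hw)))
    refine tendsto_nhds_unique (hlim.congr' ?_) tendsto_const_nhds
    filter_upwards [eventually_ge_atTop 1] with n hn using hz n hn
  have hA : τm2 = 0 := by
    have := key (fun x => ((q₀' * q₀ + p₀) * x.1 ^ 2 + p) *
          (τm2 + τm1 * x.1 + τ0 * x.1 ^ 2 + x.2.1 * x.1 ^ 3)
        + q₀' * (τm2 + τm1 * x.1 + τ0 * x.1 ^ 2 + x.2.1 * x.1 ^ 3) *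
          (τm2 * (1 + x.1 ^ 2) + τm1 * (x.1 + x.2.2.2 * x.1 ^ 3) + τ0 * x.1 ^ 2 + x.2.2.1 * x.1 ^ 3)
        - (p + p₀' * x.1 ^ 2) *
          (τm2 * (1 + x.1 ^ 2) + τm1 * (x.1 + x.2.2.2 * x.1 ^ 3) + τ0 * x.1 ^ 2 + x.2.2.1 * x.1 ^ 3)
        - (p + p₀' * x.1 ^ 2) * q₀ * x.1 ^ 2) (by fun_prop) fun n hn => by
      obtain ⟨h0, hcast, hXn, hXs⟩ := h n hn
      have hr := hrec n hn
      rw [ha, ha', hb, hb', hcast, hXn, hXs] at hr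
      field_simp at hr
      linear_combination hr
    simpa [hq₀'] using this
  subst hA
  have hB : q₀' * τm1 ^ 2 = q₀ * p := by
    have := key (fun x => (q₀' * q₀ + p₀) * x.1 * (τm1 + τ0 * x.1 + x.2.1 * x.1 ^ 2)
        + p * x.1 * (x.2.1 - τm1 * x.2.2.2 - x.2.2.1)
        + q₀' * (τm1 + τ0 * x.1 + x.2.1 * x.1 ^ 2) *
          (τm1 * (1 + x.2.2.2 * x.1 ^ 2) + τ0 * x.1 + x.2.2.1 * x.1 ^ 2)
        - p₀' * x.1 * (τm1 * (1 + x.2.2.2 * x.1 ^ 2) + τ0 * x.1 + x.2.2.1 * x.1 ^ 2)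
        - (p + p₀' * x.1 ^ 2) * q₀) (by fun_prop) fun n hn => by
      obtain ⟨h0, hcast, hXn, hXs⟩ := h n hn
      have hr := hrec n hn
      rw [ha, ha', hb, hb', hcast, hXn, hXs] at hr
      field_simp at hr
      refine mul_left_cancel₀ (pow_ne_zero 2 h0) ?_
      linear_combination hr
    simp at this
    linear_combination this
  have hB0 : τm1 ≠ 0 := by
    rintro rfl
    simp_all
  refine ⟨rfl, hB, hB0, ?_⟩
  have := key (fun x => (q₀' * q₀ + p₀) * (τm1 + τ0 * x.1 + x.2.1 * x.1 ^ 2)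
      + p * (x.2.1 - τm1 * x.2.2.2 - x.2.2.1)
      + q₀' * (τm1 * (τm1 * x.2.2.2 * x.1 + τ0 + x.2.2.1 * x.1) + (τ0 + x.2.1 * x.1) *
        (τm1 * (1 + x.2.2.2 * x.1 ^ 2) + τ0 * x.1 + x.2.2.1 * x.1 ^ 2))
      - p₀' * (τm1 * (1 + x.2.2.2 * x.1 ^ 2) + τ0 * x.1 + x.2.2.1 * x.1 ^ 2)
      - p₀' * q₀ * x.1) (by fun_prop) fun n hn => by
    obtain ⟨h0, hcast, hXn, hXs⟩ := h n hn
    have hr := hrec n hn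
    rw [ha, ha', hb, hb', hcast, hXn, hXs] at hr
    field_simp at hr
    refine mul_left_cancel₀ (pow_ne_zero 3 h0) ?_
    linear_combination hr - e n ^ 2 * hB
  simp at this
  rw [eq_div_iff (by simpa using hq₀')]
  refine mul_left_cancel₀ hB0 ?_
  linear_combination 2 * this
end

section
/- Let p₋₁, p₋₁', p₀, p₀', q₋₁, q₋₁', q₀, q₀' be complex numbers with p₋₁ ≠ 0, p₋₁' ≠ 0, q₋₁ ≠ 0, q₋₁' ≠ 0 (the class D₁₁: degree-1 numerators and degree-1 denominators). Let a, a', b, b' : ℕ → ℂ satisfy a_{n+1} = p₋₁·n + p₀ + O(n^{−1}), a'_n = p₋₁'·n + p₀' + O(n^{−1}), b_{n+1} = q₋₁·n + q₀ + O(n^{−1}), b'_n = q₋₁'·n + q₀' + O(n^{−1}). Suppose X : ℕ → ℂ satisfies the tail recurrence (b'_n·b_{n+1} + a_{n+1})·X_n + b'_n·X_n·X_{n+1} − a'_n·X_{n+1} − a'_n·b_{n+1} = 0 for all n ≥ 1, and X_n = τ₋₂·n + τ₋₁·n^{1/2} + τ₀ + τ₁·n^{−1/2} + O(n^{−1}) for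 some complex τ₋₂, τ₋₁, τ₀, τ₁. Then τ₋₁ = 0, τ₋₂ = 0 or τ₋₂ = −q₋₁, and moreover: if τ₋₂ = 0 then τ₀ = p₋₁'/q₋₁', while if τ₋₂ = −q₋₁ then τ₀ = q₋₁ − q₀ − p₋₁/q₋₁'. -/
open Asymptotics Filter

open Topology

theorem tendsto_natCast_rpow_neg_atTop {s : ℝ} (hs : 0 < s) :
    Tendsto (fun n : ℕ => (n : ℝ) ^ (-s)) atTop (𝓝 0) :=
  (tendsto_rpow_neg_atTop hs).comp tendsto_natCast_atTop_atTop

theorem tendsto_rpowC_neg {s : ℝ} (hs : 0 < s) : Tendsto (rpowC (-s)) atTop (𝓝 0) := by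
  have h := (Complex.continuous_ofReal.tendsto 0).comp (tendsto_natCast_rpow_neg_atTop hs)
  rw [Complex.ofReal_zero] at h
  exact h

/-- A sequence with `f n = c * n + d + O(n⁻¹)` differs from `c * n` by a sequence tending to `d`. -/
theorem tendsto_sub_of_isBigO_affine {f : ℕ → ℂ} {c d : ℂ}
    (h : (fun n : ℕ => f n - (c * n + d)) =O[atTop] fun n : ℕ => (n : ℝ) ^ (-(1 : ℝ))) :
    Tendsto (fun n : ℕ => f n - c * n) atTop (𝓝 d) := by
  have h0 := (h.trans_tendsto (tendsto_natCast_rpow_neg_atTop one_pos)).add_const d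
  rw [zero_add] at h0
  exact h0.congr fun n => by ring

theorem rpowC_half_mul_neg_half {n : ℕ} (hn : 1 ≤ n) :
    rpowC (1 / 2) n * rpowC (-(1 / 2)) n = 1 := by
  have hpos : (0 : ℝ) < n := by exact_mod_cast hn
  simp only [rpowC]
  rw [← Complex.ofReal_mul, ← Real.rpow_add hpos]
  simp

theorem natCast_mul_rpowC_neg_half_sq {n : ℕ} (hn : 1 ≤ n) :
    (n : ℂ) * rpowC (-(1 / 2)) n ^ 2 = 1 := by
  have hpos : (0 : ℝ) < n := by exact_mod_cast hn
  have h : (n : ℝ) * ((n : ℝ) ^ (-(1 / 2) : ℝ)) ^ 2 = 1 := by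
    rw [← Real.rpow_natCast, ← Real.rpow_mul hpos.le]
    norm_num [Real.rpow_neg_one, hpos.ne']
  simp only [rpowC]
  exact_mod_cast h

/-- Consecutive square roots become arbitrarily close. -/
theorem tendsto_rpowC_half_succ_sub :
    Tendsto (fun n => rpowC (1 / 2) (n + 1) - rpowC (1 / 2) n) atTop (𝓝 0) := by
  refine squeeze_zero_norm' ?_ (tendsto_natCast_rpow_neg_atTop (s := 1 / 2) (by norm_num))
  filter_upwards [eventually_ge_atTop 1] with n hn
  have hpos : (0 : ℝ) < n := by exact_mod_cast hn
  simp only [rpowC]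
  rw [← Complex.ofReal_sub, Complex.norm_real, Real.rpow_neg hpos.le, ← Real.sqrt_eq_rpow,
    ← Real.sqrt_eq_rpow, Real.norm_eq_abs]
  push_cast
  have hs : 0 < √(n : ℝ) := Real.sqrt_pos.2 hpos
  have hle : √(n : ℝ) ≤ √((n : ℝ) + 1) := Real.sqrt_le_sqrt (by linarith)
  have h1 : √(n : ℝ) ^ 2 = n := Real.sq_sqrt hpos.le
  have h2 : √((n : ℝ) + 1) ^ 2 = n + 1 := Real.sq_sqrt (by linarith)
  rw [abs_of_nonneg (by linarith), inv_eq_one_div, le_div_iff₀ hs]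
  nlinarith

/-- Class D₁₁: the tail expansion coefficients. -/
theorem stmt2 (pm1 pm1' p₀ p₀' qm1 qm1' q₀ q₀' : ℂ)
    (hpm1 : pm1 ≠ 0) (hpm1' : pm1' ≠ 0) (hqm1 : qm1 ≠ 0) (hqm1' : qm1' ≠ 0)
    (a a' b b' : ℕ → ℂ)
    (ha : (fun n : ℕ => a (n + 1) - (pm1 * n + p₀))
      =O[atTop] fun n : ℕ => (n : ℝ) ^ (-(1 : ℝ)))
    (ha' : (fun n : ℕ => a' n - (pm1' * n + p₀'))
      =O[atTop] fun n : ℕ => (n : ℝ) ^ (-(1 : ℝ)))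
    (hb : (fun n : ℕ => b (n + 1) - (qm1 * n + q₀))
      =O[atTop] fun n : ℕ => (n : ℝ) ^ (-(1 : ℝ)))
    (hb' : (fun n : ℕ => b' n - (qm1' * n + q₀'))
      =O[atTop] fun n : ℕ => (n : ℝ) ^ (-(1 : ℝ)))
    (X : ℕ → ℂ)
    (hrec : ∀ n : ℕ, 1 ≤ n →
      (b' n * b (n + 1) + a (n + 1)) * X n + b' n * X n * X (n + 1)
        - a' n * X (n + 1) - a' n * b (n + 1) = 0)
    (τm2 τm1 τ0 τ1 : ℂ)
    (hX : (fun n : ℕ => X n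
        - (τm2 * n + τm1 * rpowC (1 / 2) n + τ0 + τ1 * rpowC (-(1 / 2)) n))
      =O[atTop] fun n : ℕ => (n : ℝ) ^ (-(1 : ℝ))) :
    τm1 = 0 ∧ (τm2 = 0 ∨ τm2 = -qm1) ∧
      (τm2 = 0 → τ0 = pm1' / qm1') ∧
      (τm2 = -qm1 → τ0 = qm1 - q₀ - pm1 / qm1') := by
  have hw : Tendsto (rpowC (-(1 / 2))) atTop (𝓝 0) := tendsto_rpowC_neg (by norm_num)
  have hα := tendsto_sub_of_isBigO_affine ha
  have hα' := tendsto_sub_of_isBigO_affine ha'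
  have hβ := tendsto_sub_of_isBigO_affine hb
  have hβ' := tendsto_sub_of_isBigO_affine hb'
  have hU : Tendsto (fun n : ℕ => X n - τm2 * n - τm1 * rpowC (1 / 2) n) atTop (𝓝 τ0) := by
    have h := ((hX.trans_tendsto (tendsto_natCast_rpow_neg_atTop one_pos)).add_const τ0).add
      (hw.const_mul τ1)
    rw [zero_add, mul_zero, add_zero] at h
    exact h.congr fun n => by ring
  have hV : Tendsto (fun n : ℕ => X (n + 1) - τm2 * n - τm1 * rpowC (1 / 2) n) atTop
      (𝓝 (τ0 + τm2)) := by
    have h := (((tendsto_add_atTop_iff_nat 1).2 hU).add_const τm2).add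
      (tendsto_rpowC_half_succ_sub.const_mul τm1)
    rw [mul_zero, add_zero] at h
    refine h.congr fun n => ?_
    push_cast
    ring
  generalize hwd : rpowC (-(1 / 2)) = w at hw
  generalize hαd : (fun n : ℕ => a (n + 1) - pm1 * n) = α at hα
  generalize hαd' : (fun n : ℕ => a' n - pm1' * n) = α' at hα'
  generalize hβd : (fun n : ℕ => b (n + 1) - qm1 * n) = β at hβ
  generalize hβd' : (fun n : ℕ => b' n - qm1' * n) = β' at hβ'
  generalize hUd : (fun n : ℕ => X n - τm2 * n - τm1 * rpowC (1 / 2) n) = U at hU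
  generalize hVd : (fun n : ℕ => X (n + 1) - τm2 * n - τm1 * rpowC (1 / 2) n) = V at hV
  have key : ∀ᶠ n in atTop, w n ≠ 0 ∧
      ((qm1' + β' n * w n ^ 2) * (qm1 + β n * w n ^ 2) + (pm1 + α n * w n ^ 2) * w n ^ 2)
          * (τm2 + τm1 * w n + U n * w n ^ 2)
        + (qm1' + β' n * w n ^ 2) * (τm2 + τm1 * w n + U n * w n ^ 2)
          * (τm2 + τm1 * w n + V n * w n ^ 2)
        - (pm1' + α' n * w n ^ 2) * w n ^ 2 * (τm2 + τm1 * w n + V n * w n ^ 2)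
        - (pm1' + α' n * w n ^ 2) * w n ^ 2 * (qm1 + β n * w n ^ 2) = 0 := by
    filter_upwards [eventually_ge_atTop 1] with n hn
    have hs : rpowC (1 / 2) n * w n = 1 := hwd ▸ rpowC_half_mul_neg_half hn
    have hn2 : (n : ℂ) * w n ^ 2 = 1 := hwd ▸ natCast_mul_rpowC_neg_half_sq hn
    refine ⟨right_ne_zero_of_mul_eq_one hs, ?_⟩
    have eα : pm1 + α n * w n ^ 2 = a (n + 1) * w n ^ 2 := by
      rw [← hαd]; linear_combination -pm1 * hn2
    have eα' : pm1' + α' n * w n ^ 2 = a' n * w n ^ 2 := by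
      rw [← hαd']; linear_combination -pm1' * hn2
    have eβ : qm1 + β n * w n ^ 2 = b (n + 1) * w n ^ 2 := by
      rw [← hβd]; linear_combination -qm1 * hn2
    have eβ' : qm1' + β' n * w n ^ 2 = b' n * w n ^ 2 := by
      rw [← hβd']; linear_combination -qm1' * hn2
    have eU : τm2 + τm1 * w n + U n * w n ^ 2 = X n * w n ^ 2 := by
      rw [← hUd]; linear_combination -τm2 * hn2 - τm1 * w n * hs
    have eV : τm2 + τm1 * w n + V n * w n ^ 2 = X (n + 1) * w n ^ 2 := by
      rw [← hVd]; linear_combination -τm2 * hn2 - τm1 * w n * hs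
    rw [eα, eα', eβ, eβ', eU, eV]
    linear_combination w n ^ 6 * hrec n hn
  have hw2 : Tendsto (fun n => w n ^ 2) atTop (𝓝 0) := by simpa using hw.pow 2
  have hA := (hα.mul hw2).const_add pm1
  have hA' := (hα'.mul hw2).const_add pm1'
  have hB := (hβ.mul hw2).const_add qm1
  have hB' := (hβ'.mul hw2).const_add qm1'
  have hx := ((hw.const_mul τm1).const_add τm2).add (hU.mul hw2)
  have hy := ((hw.const_mul τm1).const_add τm2).add (hV.mul hw2)
  have eq_zero : ∀ {f : ℕ → ℂ} {l : ℂ}, Tendsto f atTop (𝓝 l) → (∀ᶠ n in atTop, f n = 0) →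
      l = 0 := fun hf h0 =>
    tendsto_nhds_unique_of_eventuallyEq hf tendsto_const_nhds h0
  have hroot : τm2 = 0 ∨ τm2 = -qm1 := by
    have h := eq_zero (((((hB'.mul hB).add (hA.mul hw2)).mul hx).add ((hB'.mul hx).mul hy)).sub
      ((hA'.mul hw2).mul hy) |>.sub ((hA'.mul hw2).mul hB)) (key.mono fun n hn => hn.2)
    have h' : qm1' * (τm2 * (τm2 + qm1)) = 0 := by linear_combination h
    rcases mul_eq_zero.1 ((mul_eq_zero.1 h').resolve_left hqm1') with h0 | h0
    · exact Or.inl h0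
    · exact Or.inr (eq_neg_of_add_eq_zero_left h0)
  rcases hroot with h0 | h0
  · subst h0
    have hxw := (hU.mul hw).const_add τm1
    have hσ : τm1 = 0 := by
      have h := eq_zero (((((hB'.mul hB).add (hA.mul hw2)).mul hxw).add ((hB'.mul hxw).mul hy)).sub
        ((hA'.mul hw).mul hy) |>.sub ((hA'.mul hw).mul hB)) (by
          filter_upwards [key] with n hn
          apply mul_left_cancel₀ hn.1
          linear_combination hn.2)
      have h' : qm1' * qm1 * τm1 = 0 := by linear_combination h
      exact (mul_eq_zero.1 h').resolve_left (mul_ne_zero hqm1' hqm1)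
    subst hσ
    have hτ : τ0 = pm1' / qm1' := by
      have h := eq_zero (((((hB'.mul hB).add (hA.mul hw2)).mul hU).add ((hB'.mul hU).mul hy)).sub
        (hA'.mul hy) |>.sub (hA'.mul hB)) (by
          filter_upwards [key] with n hn
          apply mul_left_cancel₀ (pow_ne_zero 2 hn.1)
          linear_combination hn.2)
      have h' : qm1 * (τ0 * qm1' - pm1') = 0 := by linear_combination h
      rw [eq_div_iff hqm1']
      exact sub_eq_zero.1 ((mul_eq_zero.1 h').resolve_left hqm1)
    exact ⟨rfl, Or.inl rfl, fun _ => hτ, fun h => absurd (neg_eq_zero.1 h.symm) hqm1⟩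
  · subst h0
    have hd := (((hβ.add hV).mul hw).const_add τm1)
    have hσ : τm1 = 0 := by
      have h := eq_zero ((hx.mul ((hB'.mul hd).add (hA.mul hw))).sub ((hA'.mul hw2).mul hd)) (by
          filter_upwards [key] with n hn
          apply mul_left_cancel₀ hn.1
          linear_combination hn.2)
      have h' : qm1' * qm1 * τm1 = 0 := by linear_combination -h
      exact (mul_eq_zero.1 h').resolve_left (mul_ne_zero hqm1' hqm1)
    subst hσ
    have hτ : τ0 = qm1 - q₀ - pm1 / qm1' := by
      have h := eq_zero ((hx.mul ((hB'.mul (hβ.add hV)).add hA)).sub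
        ((hA'.mul hw2).mul (hβ.add hV))) (by
          filter_upwards [key] with n hn
          apply mul_left_cancel₀ (pow_ne_zero 2 hn.1)
          linear_combination hn.2)
      have h' : qm1 * (qm1' * (q₀ + (τ0 - qm1)) + pm1) = 0 := by linear_combination -h
      have h2 := (mul_eq_zero.1 h').resolve_left hqm1
      field_simp
      linear_combination h2
    exact ⟨rfl, Or.inr rfl, fun h => absurd (neg_eq_zero.1 h) hqm1, fun _ => hτ⟩
end

section
/- Let p₋₂ ∈ ℂ with p₋₂ ≠ 0 and let w ∈ ℂ be such that (w/p₋₂)² is not a nonpositive real number (equivalently, Re(w/p₋₂) ≠ 0). Then for every integer m ≥ −1, one has (1 + m/2)·p₋₂ + sgn(Re(w/p₋₂))·w ≠ 0. In particular, if α, β, γ ∈ ℂ with α ≠ 0, w² = β² − 4αγ, and τ := (−β + sgn(Re(w/p₋₂))·w)/(2α), and if p₋₁ − p₋₁' = β + p₋₂ + 2ατ − 2ατ (i.e., setting β = p₋₁ − p₋₁' − p₋₂), then 2τα + p₋₁ − p₋₁' + (m/2)·p₋₂ ≠ 0 for every integer m ≥ −1. -/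
open Complex

/-- A positive multiple of `p` plus `sgn(Re(w/p))·w` never vanishes: after division by `p` its
real part is at least the positive factor. -/
theorem ofReal_mul_add_sign_re_div_mul_ne_zero {p : ℂ} (w : ℂ) (hp : p ≠ 0) {c : ℝ} (hc : 0 < c) :
    (c : ℂ) * p + (Real.sign ((w / p).re) : ℂ) * w ≠ 0 := by
  intro h
  have hdiv : (c : ℂ) + (Real.sign ((w / p).re) : ℂ) * (w / p) = 0 := by
    field_simp
    linear_combination h
  have hre := congrArg Complex.re hdiv
  rw [Complex.add_re, Complex.re_ofReal_mul, Complex.ofReal_re, Complex.zero_re] at hre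
  linarith [Real.sign_mul_nonneg (w / p).re]

/-- Nonvanishing of `(1 + m/2)p₋₂ + sgn(Re(w/p₋₂))·w` for integers `m ≥ −1`, and
consequently of the coefficient `2τα + p₋₁ − p₋₁' + (m/2)p₋₂` where
`τ = (−β + sgn(Re(w/p₋₂))·w)/(2α)` is the selected root of `ατ² + βτ + γ = 0`
with `β = p₋₁ − p₋₁' − p₋₂`. -/
theorem stmt8 (pm2 w : ℂ) (hpm2 : pm2 ≠ 0)
    (hw : ¬ ∃ r : ℝ, r ≤ 0 ∧ (w / pm2) ^ 2 = (r : ℂ)) :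
    (∀ m : ℤ, -1 ≤ m →
      (1 + (m : ℂ) / 2) * pm2 + (Real.sign ((w / pm2).re) : ℂ) * w ≠ 0) ∧
    (∀ α β γ : ℂ, α ≠ 0 → w ^ 2 = β ^ 2 - 4 * α * γ →
      ∀ pm1 pm1' : ℂ, pm1 - pm1' = β + pm2 →
        ∀ m : ℤ, -1 ≤ m →
          2 * ((-β + (Real.sign ((w / pm2).re) : ℂ) * w) / (2 * α)) * α
            + pm1 - pm1' + (m : ℂ) / 2 * pm2 ≠ 0) := by
  have main : ∀ m : ℤ, -1 ≤ m →
      (1 + (m : ℂ) / 2) * pm2 + (Real.sign ((w / pm2).re) : ℂ) * w ≠ 0 := by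
    intro m hm
    have hm' : (-1 : ℝ) ≤ m := by exact_mod_cast hm
    have hc : (0 : ℝ) < 1 + m / 2 := by linarith
    simpa using ofReal_mul_add_sign_re_div_mul_ne_zero w hpm2 hc
  refine ⟨main, fun α β γ hα _ pm1 pm1' hβ m hm h => main m hm ?_⟩
  have hτ : 2 * ((-β + (Real.sign ((w / pm2).re) : ℂ) * w) / (2 * α)) * α
      = -β + (Real.sign ((w / pm2).re) : ℂ) * w := by
    rw [mul_right_comm, mul_div_cancel₀ _ (mul_ne_zero two_ne_zero hα)]
  linear_combination h - hτ - hβ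
end

section
/- Let p, p₀, p₀', q₀, q₀' be complex numbers with p ≠ 0, q₀ ≠ 0, q₀' ≠ 0, and define a_{n+1} = p·n + p₀, b_{n+1} = q₀. Let u : ℕ → ℂ and complex numbers τ₋₁ ≠ 0, τ₀, τ₁ satisfy u_n = τ₋₁·n^{1/2} + τ₀ + τ₁·n^{−1/2} + O(n^{−1}) as n → ∞ (so in particular q₀ + u_{n+1} ≠ 0 for all sufficiently large n). Then the product sequence I_n := a_{n+1}·u_n/(b_{n+1} + u_{n+1}) satisfies I_n = p·n − (p·q₀/τ₋₁)·n^{1/2} + O(1) as n → ∞. -/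
open Asymptotics Filter

/-- If `u n = τ √n + O(1)` with `τ ≠ 0` and the increments of `u` are `O(1/√n)`, then
`(p n + p₀) u n / (q + u (n + 1)) = p n - (p q / τ) √n + O(1)`. -/
theorem isBigO_tail_product_of_increment (p p₀ q τ : ℂ) (hτ : τ ≠ 0) (u : ℕ → ℂ)
    (hu : (fun n : ℕ => u n - τ * (√(n : ℝ) : ℂ)) =O[atTop] fun _ : ℕ => (1 : ℝ))
    (hd : (fun n : ℕ => u (n + 1) - u n) =O[atTop] fun n : ℕ => (√(n : ℝ))⁻¹) :
    (fun n : ℕ => (p * n + p₀) * u n / (q + u (n + 1))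
        - (p * n - p * q / τ * (√(n : ℝ) : ℂ)))
      =O[atTop] fun _ : ℕ => (1 : ℝ) := by
  have hpos : ∀ᶠ n : ℕ in atTop, 0 < √(n : ℝ) := by
    filter_upwards [eventually_gt_atTop 0] with n hn
    positivity
  have hs : Tendsto (fun n : ℕ => √(n : ℝ)) atTop atTop :=
    Real.tendsto_sqrt_atTop.comp tendsto_natCast_atTop_atTop
  have h1s : (fun _ : ℕ => (1 : ℝ)) =o[atTop] fun n : ℕ => √(n : ℝ) :=
    (isLittleO_const_left.2 <| Or.inr <| tendsto_norm_atTop_atTop.comp hs)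
  have hinv1 : (fun n : ℕ => (√(n : ℝ))⁻¹) =O[atTop] fun _ : ℕ => (1 : ℝ) :=
    hs.inv_tendsto_atTop.isBigO_one ℝ
  have hS : (fun n : ℕ => (√(n : ℝ) : ℂ)) =O[atTop] fun n : ℕ => √(n : ℝ) :=
    IsBigO.of_bound 1 (Eventually.of_forall fun n => by simp)
  have hS' : (fun n : ℕ => √(n : ℝ)) =O[atTop] fun n : ℕ => τ * (√(n : ℝ) : ℂ) := by
    refine IsBigO.of_bound ‖τ‖⁻¹ (Eventually.of_forall fun n => le_of_eq ?_)
    have : ‖τ‖ ≠ 0 := norm_ne_zero_iff.2 hτ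
    simp [field]
  have hD1 : (fun n : ℕ => q + u (n + 1) - τ * (√(n : ℝ) : ℂ))
      =O[atTop] fun _ : ℕ => (1 : ℝ) :=
    (((isBigO_const_const q (one_ne_zero (α := ℝ)) atTop).add (hd.trans hinv1)).add hu).congr_left
      fun n => by ring
  have hequiv : IsEquivalent atTop (fun n : ℕ => q + u (n + 1))
      (fun n : ℕ => τ * (√(n : ℝ) : ℂ)) :=
    (hD1.trans_isLittleO h1s).trans_isBigO hS'
  have hsD : (fun n : ℕ => √(n : ℝ)) =O[atTop] fun n : ℕ => q + u (n + 1) :=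
    hS'.trans hequiv.isBigO_symm
  have hDinv : (fun n : ℕ => (q + u (n + 1))⁻¹) =O[atTop] fun n : ℕ => (√(n : ℝ))⁻¹ :=
    hsD.inv_rev (hpos.mono fun n hn h => absurd h hn.ne')
  have hus : u =O[atTop] fun n : ℕ => √(n : ℝ) :=
    ((hu.trans h1s.isBigO).add (hS.const_mul_left τ)).congr_left fun n => by ring
  have hnd : (fun n : ℕ => (√(n : ℝ) : ℂ) * (√(n : ℝ) : ℂ) * (u (n + 1) - u n))
      =O[atTop] fun n : ℕ => √(n : ℝ) := by
    refine ((hS.mul hS).mul hd).congr' EventuallyEq.rfl ?_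
    filter_upwards [hpos] with n hn
    field_simp
  have hSD : (fun n : ℕ => (√(n : ℝ) : ℂ) * (q + u (n + 1) - τ * (√(n : ℝ) : ℂ)))
      =O[atTop] fun n : ℕ => √(n : ℝ) := by
    simpa using hS.mul hD1
  have hnum := ((hnd.const_mul_left (-p)).add (hus.const_mul_left p₀)).add
    (hSD.const_mul_left (p * q / τ))
  refine (hnum.mul hDinv).congr' ?_ ?_
  · filter_upwards [hsD.eq_zero_imp, hpos] with n hn hn0
    have hD : q + u (n + 1) ≠ 0 := fun h => hn0.ne' (hn h)
    have hn2 : (n : ℂ) = (√(n : ℝ) : ℂ) * (√(n : ℝ) : ℂ) := by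
      rw [← Complex.ofReal_mul, Real.mul_self_sqrt n.cast_nonneg, Complex.ofReal_natCast]
    rw [hn2]
    generalize (√(n : ℝ) : ℂ) = s
    field_simp
    ring
  · filter_upwards [hpos] with n hn
    exact mul_inv_cancel₀ hn.ne'

/-- A sequence `τ √n + τ₀ + τ₁ / √n + O(1/n)` has increments `O(1/√n)`. -/
theorem isBigO_increment_of_sqrt_expansion (u : ℕ → ℂ) (τ τ₀ τ₁ : ℂ)
    (hu : (fun n : ℕ => u n - (τ * (√(n : ℝ) : ℂ) + τ₀ + τ₁ * ((√(n : ℝ))⁻¹ : ℝ)))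
      =O[atTop] fun n : ℕ => (√(n : ℝ))⁻¹) :
    (fun n : ℕ => u (n + 1) - u n) =O[atTop] fun n : ℕ => (√(n : ℝ))⁻¹ := by
  have hshift : (fun n : ℕ => (√((n + 1 : ℕ) : ℝ))⁻¹) =O[atTop] fun n : ℕ => (√(n : ℝ))⁻¹ := by
    refine IsBigO.of_bound 1 ?_
    filter_upwards [eventually_gt_atTop 0] with n hn
    rw [Real.norm_of_nonneg (by positivity), Real.norm_of_nonneg (by positivity), one_mul]
    gcongr
    simp
  have hsqrt : (fun n : ℕ => ((√((n + 1 : ℕ) : ℝ) - √(n : ℝ) : ℝ) : ℂ))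
      =O[atTop] fun n : ℕ => (√(n : ℝ))⁻¹ := by
    refine IsBigO.of_bound 1 ?_
    filter_upwards [eventually_gt_atTop 0] with n hn
    have hle : √(n : ℝ) ≤ √((n + 1 : ℕ) : ℝ) := by gcongr; simp
    have hpos : 0 < √(n : ℝ) := by positivity
    rw [Complex.norm_real, Real.norm_of_nonneg (sub_nonneg.2 hle),
      Real.norm_of_nonneg (by positivity), one_mul, ← one_div, le_div_iff₀ hpos]
    have h1 := Real.mul_self_sqrt (n.cast_nonneg (α := ℝ))
    have h2 := Real.mul_self_sqrt ((n + 1).cast_nonneg (α := ℝ))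
    push_cast at h1 h2 hle ⊢
    nlinarith
  have hinv : (fun n : ℕ => (((√(n : ℝ))⁻¹ : ℝ) : ℂ)) =O[atTop] fun n : ℕ => (√(n : ℝ))⁻¹ :=
    IsBigO.of_bound 1 (Eventually.of_forall fun n => by simp)
  have hsucc := tendsto_add_atTop_nat 1
  refine (((hsqrt.const_mul_left τ).add ((((hinv.comp_tendsto hsucc).trans hshift).sub
    hinv).const_mul_left τ₁)).add (((hu.comp_tendsto hsucc).trans hshift).sub hu)).congr_left
    fun n => ?_
  simp only [Function.comp_apply, Complex.ofReal_sub]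
  ring

/-- Class D⁼₁₀: asymptotics of the tail product
`I_n = a_{n+1} u_n / (b_{n+1} + u_{n+1})` with `a_{n+1} = p n + p₀`,
`b_{n+1} = q₀`. -/
theorem stmt9 (p p₀ p₀' q₀ q₀' : ℂ) (hp : p ≠ 0) (hq₀ : q₀ ≠ 0) (hq₀' : q₀' ≠ 0)
    (u : ℕ → ℂ) (τm1 τ0 τ1 : ℂ) (hτm1 : τm1 ≠ 0)
    (hu : (fun n : ℕ => u n
        - (τm1 * rpowC (1 / 2) n + τ0 + τ1 * rpowC (-(1 / 2)) n))
      =O[atTop] fun n : ℕ => (n : ℝ) ^ (-(1 : ℝ))) :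
    (fun n : ℕ => (p * n + p₀) * u n / (q₀ + u (n + 1))
        - (p * n - p * q₀ / τm1 * rpowC (1 / 2) n))
      =O[atTop] fun _ : ℕ => (1 : ℝ) := by
  have hhalf : ∀ n, rpowC (1 / 2) n = (√(n : ℝ) : ℂ) := fun n => by
    rw [rpowC, Real.sqrt_eq_rpow]
  have hneg : ∀ n, rpowC (-(1 / 2)) n = ((√(n : ℝ))⁻¹ : ℝ) := fun n => by
    rw [rpowC, Real.rpow_neg n.cast_nonneg, Real.sqrt_eq_rpow]
  simp only [hhalf, hneg] at hu ⊢
  have hinv1 : (fun n : ℕ => (√(n : ℝ))⁻¹) =O[atTop] fun _ : ℕ => (1 : ℝ) :=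
    (Real.tendsto_sqrt_atTop.comp tendsto_natCast_atTop_atTop).inv_tendsto_atTop.isBigO_one ℝ
  have hrpow : (fun n : ℕ => (n : ℝ) ^ (-(1 : ℝ))) =O[atTop] fun n : ℕ => (√(n : ℝ))⁻¹ := by
    refine ((isBigO_refl _ _).mul hinv1).congr (fun n => ?_) fun n => mul_one _
    rw [Real.rpow_neg_one, ← mul_inv, Real.mul_self_sqrt n.cast_nonneg]
  have hu' := hu.trans hrpow
  refine isBigO_tail_product_of_increment p p₀ q₀ τm1 hτm1 u ?_
    (isBigO_increment_of_sqrt_expansion u τm1 τ0 τ1 hu')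
  have hinv : (fun n : ℕ => (((√(n : ℝ))⁻¹ : ℝ) : ℂ)) =O[atTop] fun _ : ℕ => (1 : ℝ) :=
    (IsBigO.of_bound 1 (Eventually.of_forall fun n => by simp)).trans hinv1
  exact (((hu'.trans hinv1).add (isBigO_const_const τ0 (one_ne_zero (α := ℝ)) atTop)).add
    (hinv.const_mul_left τ1)).congr_left fun n => by ring
end

section
/- Let p₋₂, p₋₁, p₀, q₀ be complex numbers with p₋₂ ≠ 0, and let a, b : ℕ → ℂ satisfy a_{n+1} = p₋₂·n² + p₋₁·n + p₀ + O(n^{−1}) and b_{n+1} = q₀ + O(n^{−1}). Let u : ℕ → ℂ and complex numbers τ₋₂ ≠ 0, τ₀ satisfy u_n = τ₋₂·n + τ₀ + O(n^{−1}) as n → ∞ (so in particular b_{n+1} + u_{n+1} ≠ 0 for all sufficiently large n). Then the product sequence I_n := a_{n+1}·u_n/(b_{n+1} + u_{n+1}) satisfies I_n = p₋₂·n² + (p₋₁ − p₋₂ − p₋₂·q₀/τ₋₂)·n + O(1) as n → ∞. -/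
open Asymptotics Filter

/-- A sequence that is `O(n⁻¹)` stays bounded after multiplication by `n`. -/
theorem isBigO_one_natCast_mul {f : ℕ → ℂ}
    (hf : f =O[atTop] fun n : ℕ => (n : ℝ) ^ (-(1 : ℝ))) :
    (fun n : ℕ => (n : ℂ) * f n) =O[atTop] fun _ : ℕ => (1 : ℝ) := by
  have hn : (fun n : ℕ => (n : ℂ)) =O[atTop] fun n : ℕ => (n : ℝ) :=
    isBigO_of_le _ fun n => by simp
  refine (hn.mul hf).trans_eventuallyEq ?_
  filter_upwards [eventually_ne_atTop 0] with n hn0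
  have : (n : ℝ) ≠ 0 := Nat.cast_ne_zero.mpr hn0
  rw [Real.rpow_neg_one, mul_inv_cancel₀ this]

/-- The class of `O(n⁻¹)` sequences is stable under the shift `n ↦ n + 1`. -/
theorem isBigO_rpow_neg_one_shift {f : ℕ → ℂ}
    (hf : f =O[atTop] fun n : ℕ => (n : ℝ) ^ (-(1 : ℝ))) :
    (fun n : ℕ => f (n + 1)) =O[atTop] fun n : ℕ => (n : ℝ) ^ (-(1 : ℝ)) := by
  refine (hf.comp_tendsto (tendsto_add_atTop_nat 1)).trans (IsBigO.of_bound 1 ?_)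
  filter_upwards [eventually_gt_atTop 0] with n hn
  have hpos : (0 : ℝ) < n := Nat.cast_pos.mpr hn
  simp only [Function.comp_apply, Real.rpow_neg_one, norm_inv, Real.norm_natCast, one_mul]
  gcongr
  simp

/-- Class D⁼₂₀: asymptotics of the tail product
`I_n = a_{n+1} u_n / (b_{n+1} + u_{n+1})`. -/
theorem stmt10 (pm2 pm1 p₀ q₀ : ℂ) (hpm2 : pm2 ≠ 0)
    (a b : ℕ → ℂ)
    (ha : (fun n : ℕ => a (n + 1) - (pm2 * n ^ 2 + pm1 * n + p₀))
      =O[atTop] fun n : ℕ => (n : ℝ) ^ (-(1 : ℝ)))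
    (hb : (fun n : ℕ => b (n + 1) - q₀)
      =O[atTop] fun n : ℕ => (n : ℝ) ^ (-(1 : ℝ)))
    (u : ℕ → ℂ) (τm2 τ0 : ℂ) (hτm2 : τm2 ≠ 0)
    (hu : (fun n : ℕ => u n - (τm2 * n + τ0))
      =O[atTop] fun n : ℕ => (n : ℝ) ^ (-(1 : ℝ))) :
    (fun n : ℕ => a (n + 1) * u n / (b (n + 1) + u (n + 1))
        - (pm2 * n ^ 2 + (pm1 - pm2 - pm2 * q₀ / τm2) * n))
      =O[atTop] fun _ : ℕ => (1 : ℝ) := by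
  have hbdd {f g : ℕ → ℂ} (hf : f =O[atTop] fun _ : ℕ => (1 : ℝ))
      (hg : g =O[atTop] fun _ : ℕ => (1 : ℝ)) :
      (fun n => f n * g n) =O[atTop] fun _ : ℕ => (1 : ℝ) := by
    simpa using hf.mul hg
  have hA := isBigO_one_natCast_mul ha
  have hB := isBigO_one_natCast_mul hb
  have hE := isBigO_one_natCast_mul hu
  have hF := isBigO_one_natCast_mul (isBigO_rpow_neg_one_shift hu)
  set A : ℕ → ℂ := fun n => n * (a (n + 1) - (pm2 * n ^ 2 + pm1 * n + p₀)) with hAdef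
  set B : ℕ → ℂ := fun n => n * (b (n + 1) - q₀) with hBdef
  set E : ℕ → ℂ := fun n => n * (u n - (τm2 * n + τ0)) with hEdef
  set F : ℕ → ℂ := fun n => n * (u (n + 1) - (τm2 * (n + 1 : ℕ) + τ0)) with hFdef
  set k : ℂ := pm1 - pm2 - pm2 * q₀ / τm2 with hk
  set t : ℕ → ℂ := fun n => (n : ℂ)⁻¹ with ht
  have ht0 : Tendsto t atTop (nhds 0) := tendsto_inv_atTop_nhds_zero_nat
  have hpoly {P : ℂ → ℂ} (hP : Continuous P) :
      (fun n => P (t n)) =O[atTop] fun _ : ℕ => (1 : ℝ) :=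
    ((hP.tendsto 0).comp ht0).isBigO_one ℝ
  -- the numerator of the error, divided by `n`
  have hX : (fun n => (p₀ * τm2 + pm1 * τ0 - k * (τm2 + τ0 + q₀) + p₀ * τ0 * t n)
      + (pm2 + pm1 * t n + p₀ * t n ^ 2) * E n + (τm2 * t n + τ0 * t n ^ 2) * A n
      + t n ^ 3 * (A n * E n) - (pm2 + k * t n) * (B n + F n))
      =O[atTop] fun _ : ℕ => (1 : ℝ) := by
    refine ((((?_ : IsBigO _ _ _).add (hbdd ?_ hE)).add (hbdd ?_ hA)).add
      (hbdd ?_ (hbdd hA hE))).sub (hbdd ?_ (hB.add hF))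
    · exact hpoly (P := fun x => p₀ * τm2 + pm1 * τ0 - k * (τm2 + τ0 + q₀) + p₀ * τ0 * x)
        (by fun_prop)
    · exact hpoly (P := fun x => pm2 + pm1 * x + p₀ * x ^ 2) (by fun_prop)
    · exact hpoly (P := fun x => τm2 * x + τ0 * x ^ 2) (by fun_prop)
    · exact hpoly (P := fun x => x ^ 3) (by fun_prop)
    · exact hpoly (P := fun x => pm2 + k * x) (by fun_prop)
  -- the denominator, divided by `n`
  have hY : Tendsto (fun n => τm2 + (τm2 + τ0 + q₀) * t n + t n * (t n * (B n + F n)))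
      atTop (nhds τm2) := by
    have ht1 : t =o[atTop] fun _ : ℕ => (1 : ℝ) := (isLittleO_one_iff ℝ).mpr ht0
    have hBF : Tendsto (fun n => t n * (B n + F n)) atTop (nhds 0) :=
      (isLittleO_one_iff ℝ).mp (by simpa using ht1.mul_isBigO (hB.add hF))
    simpa using (tendsto_const_nhds.add (ht0.const_mul (τm2 + τ0 + q₀))).add (ht0.mul hBF)
  refine (hbdd hX ((hY.inv₀ hτm2).isBigO_one ℝ)).congr' ?_ EventuallyEq.rfl
  filter_upwards [eventually_ne_atTop 0, hY.eventually_ne hτm2] with n hn hYn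
  have hn0 : (n : ℂ) ≠ 0 := Nat.cast_ne_zero.mpr hn
  have hD : b (n + 1) + u (n + 1)
      = n * (τm2 + (τm2 + τ0 + q₀) * t n + t n * (t n * (B n + F n))) := by
    simp only [ht, hBdef, hFdef]
    push_cast
    field_simp
    ring
  have hD0 : b (n + 1) + u (n + 1) ≠ 0 := hD ▸ mul_ne_zero hn0 hYn
  have hYD : τm2 + (τm2 + τ0 + q₀) * t n + t n * (t n * (B n + F n))
      = (b (n + 1) + u (n + 1)) / n := by
    rw [hD, mul_div_cancel_left₀ _ hn0]
  have hkτ : k * τm2 = (pm1 - pm2) * τm2 - pm2 * q₀ := by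
    rw [hk]; field_simp
  rw [hYD, inv_div, ← mul_div_assoc, div_eq_iff hD0, sub_mul (_ / _), div_mul_cancel₀ _ hD0]
  simp only [ht, hAdef, hBdef, hEdef, hFdef]
  push_cast
  field_simp
  linear_combination (n : ℂ) ^ 2 * hkτ
end

section
/- Let p₋₂, p₋₁, p₀, q₋₁, q₀ be complex numbers with p₋₂ ≠ 0 and q₋₁ ≠ 0, and let a, b : ℕ → ℂ satisfy a_{n+1} = p₋₂·n² + p₋₁·n + p₀ + O(n^{−1}) and b_{n+1} = q₋₁·n + q₀ + O(n^{−1}). Let u : ℕ → ℂ and complex numbers τ₋₂, τ₀ with τ₋₂ + q₋₁ ≠ 0 satisfy u_n = τ₋₂·n + τ₀ + O(n^{−1/2}) as n → ∞ (so in particular b_{n+1} + u_{n+1} ≠ 0 for all sufficiently large n). Then the product sequence I_n := a_{n+1}·u_n/(b_{n+1} + u_{n+1}) satisfies I_n = (τ₋₂·p₋₂/(τ₋₂ + q₋₁))·n² + O(n^{3/2}) as n → ∞. -/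
open Asymptotics Filter

theorem natCast_rpow_isBigO_one_of_nonpos {s : ℝ} (hs : s ≤ 0) :
    (fun n : ℕ => (n : ℝ) ^ s) =O[atTop] fun _ : ℕ => (1 : ℝ) := by
  refine IsBigO.of_bound 1 ?_
  filter_upwards [eventually_ge_atTop 1] with n hn
  rw [Real.norm_of_nonneg (by positivity), norm_one, mul_one]
  exact Real.rpow_le_one_of_one_le_of_nonpos (by exact_mod_cast hn) hs

theorem one_isLittleO_natCast :
    (fun _ : ℕ => (1 : ℝ)) =o[atTop] fun n : ℕ => (n : ℝ) :=
  (isLittleO_const_left_of_ne one_ne_zero).2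
    (tendsto_norm_atTop_atTop.comp tendsto_natCast_atTop_atTop)

theorem complex_natCast_isBigO_natCast :
    (fun n : ℕ => (n : ℂ)) =O[atTop] fun n : ℕ => (n : ℝ) :=
  IsBigO.of_bound 1 (Eventually.of_forall fun n => by simp)

/-- A product of sequences with quadratic and linear leading terms, divided by a sequence with a
nonzero linear leading term, is quadratic up to a linear error. -/
theorem mul_div_sub_quadratic_isBigO {x y z : ℕ → ℂ} {p t r : ℂ} (hr : r ≠ 0)
    (hx : (fun n : ℕ => x n - p * n ^ 2) =O[atTop] fun n : ℕ => (n : ℝ))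
    (hy : (fun n : ℕ => y n - t * n) =O[atTop] fun _ : ℕ => (1 : ℝ))
    (hz : (fun n : ℕ => z n - r * n) =O[atTop] fun _ : ℕ => (1 : ℝ)) :
    (fun n : ℕ => x n * y n / z n - t * p / r * (n : ℂ) ^ 2)
      =O[atTop] fun n : ℕ => (n : ℝ) := by
  have hN := complex_natCast_isBigO_natCast
  have hlead : (fun n : ℕ => (n : ℝ)) =O[atTop] fun n : ℕ => r * (n : ℂ) :=
    IsBigO.of_bound ‖r‖⁻¹ (Eventually.of_forall fun n => by
      simp [inv_mul_cancel_left₀ (norm_ne_zero_iff.2 hr)])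
  have hnz : (fun n : ℕ => (n : ℝ)) =O[atTop] z := by
    have hsmall := (hz.trans_isLittleO one_isLittleO_natCast).trans_isBigO hlead
    simpa using hlead.trans hsmall.right_isBigO_add
  have hinv : (fun n => (z n)⁻¹) =O[atTop] fun n : ℕ => (n : ℝ)⁻¹ := by
    refine hnz.inv_rev ?_
    filter_upwards [eventually_ge_atTop 1] with n hn h0
    exact absurd h0 (by positivity)
  have hz0 : ∀ᶠ n in atTop, z n ≠ 0 := by
    filter_upwards [hnz.eq_zero_imp, eventually_ge_atTop 1] with n h hn h0
    exact absurd (h h0) (by positivity)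
  have hnum : (fun n : ℕ => p * n ^ 2 * (y n - t * n) + (x n - p * n ^ 2) * (t * n)
      + (x n - p * n ^ 2) * (y n - t * n) - t * p / r * n ^ 2 * (z n - r * n))
      =O[atTop] fun n : ℕ => (n : ℝ) ^ 2 := by
    have h₁ := ((hN.pow 2).const_mul_left p).mul hy
    have h₂ := hx.mul (hN.const_mul_left t)
    have h₃ := hx.mul (hy.trans one_isLittleO_natCast.isBigO)
    have h₄ := ((hN.pow 2).const_mul_left (t * p / r)).mul hz
    simp only [mul_one, ← pow_two] at h₁ h₂ h₃ h₄
    exact ((h₁.add h₂).add h₃).sub h₄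
  refine (hnum.mul hinv).congr' ?_ ?_
  · filter_upwards [hz0] with n hn
    field_simp
    ring
  · filter_upwards [eventually_ge_atTop 1] with n hn
    have : (n : ℝ) ≠ 0 := by positivity
    field_simp

/-- Class D̃₂₁: asymptotics of the tail product
`I_n = a_{n+1} u_n / (b_{n+1} + u_{n+1})`. -/
theorem stmt11 (pm2 pm1 p₀ qm1 q₀ : ℂ) (hpm2 : pm2 ≠ 0) (hqm1 : qm1 ≠ 0)
    (a b : ℕ → ℂ)
    (ha : (fun n : ℕ => a (n + 1) - (pm2 * n ^ 2 + pm1 * n + p₀))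
      =O[atTop] fun n : ℕ => (n : ℝ) ^ (-(1 : ℝ)))
    (hb : (fun n : ℕ => b (n + 1) - (qm1 * n + q₀))
      =O[atTop] fun n : ℕ => (n : ℝ) ^ (-(1 : ℝ)))
    (u : ℕ → ℂ) (τm2 τ0 : ℂ) (hτ : τm2 + qm1 ≠ 0)
    (hu : (fun n : ℕ => u n - (τm2 * n + τ0))
      =O[atTop] fun n : ℕ => (n : ℝ) ^ (-(1 / 2 : ℝ))) :
    (fun n : ℕ => a (n + 1) * u n / (b (n + 1) + u (n + 1))
        - τm2 * pm2 / (τm2 + qm1) * (n : ℂ) ^ 2)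
      =O[atTop] fun n : ℕ => (n : ℝ) ^ ((3 : ℝ) / 2) := by
  have hone := one_isLittleO_natCast.isBigO
  have hconst (c : ℂ) : (fun _ : ℕ => c) =O[atTop] fun _ : ℕ => (1 : ℝ) :=
    isBigO_const_const c one_ne_zero _
  have hu₁ := hu.trans (natCast_rpow_isBigO_one_of_nonpos (by norm_num))
  have ha₁ := ha.trans (natCast_rpow_isBigO_one_of_nonpos (by norm_num))
  have hb₁ := hb.trans (natCast_rpow_isBigO_one_of_nonpos (by norm_num))
  have hushift : (fun n : ℕ => u (n + 1) - (τm2 * (n + 1 : ℕ) + τ0))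
      =O[atTop] fun _ : ℕ => (1 : ℝ) :=
    hu₁.comp_tendsto (tendsto_add_atTop_nat 1)
  have hx : (fun n : ℕ => a (n + 1) - pm2 * n ^ 2) =O[atTop] fun n : ℕ => (n : ℝ) :=
    (((ha₁.add (hconst p₀)).trans hone).add
      (complex_natCast_isBigO_natCast.const_mul_left pm1)).congr_left fun n => by ring
  have hy : (fun n : ℕ => u n - τm2 * n) =O[atTop] fun _ : ℕ => (1 : ℝ) :=
    (hu₁.add (hconst τ0)).congr_left fun n => by ring
  have hz : (fun n : ℕ => b (n + 1) + u (n + 1) - (τm2 + qm1) * n)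
      =O[atTop] fun _ : ℕ => (1 : ℝ) :=
    ((hb₁.add hushift).add (hconst (q₀ + τm2 + τ0))).congr_left fun n => by
      push_cast
      ring
  refine (mul_div_sub_quadratic_isBigO hτ hx hy hz).trans (IsBigO.of_bound 1 ?_)
  filter_upwards [eventually_ge_atTop 1] with n hn
  rw [Real.norm_of_nonneg (by positivity), Real.norm_of_nonneg (by positivity), one_mul]
  exact Real.self_le_rpow_of_one_le (by exact_mod_cast hn) (by norm_num)
end

section
/- Let p₋₂, p₋₂', q₋₁, q₋₁' be complex numbers with p₋₂·p₋₂' ≠ 0, and set Δ := (p₋₂ − p₋₂' + q₋₁·q₋₁')² + 4·q₋₁'·q₋₁·p₋₂'. Suppose Δ ≠ 0. If τ ∈ ℂ satisfies the quadratic equation q₋₁'·τ² + (p₋₂ − p₋₂' + q₋₁·q₋₁')·τ − q₋₁·p₋₂' = 0, then (p₋₂ + q₋₁·q₋₁' + q₋₁'·τ)² ≠ p₋₂·p₋₂'. -/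
/-- For a root `τ` of the D̃₂₁ quadratic with nonzero discriminant `Δ` and
`p₋₂ p₋₂' ≠ 0`, the quantity `(p₋₂ + q₋₁q₋₁' + q₋₁'τ)²` differs from `p₋₂ p₋₂'`. -/
theorem stmt14 (pm2 pm2' qm1 qm1' : ℂ) (hp : pm2 * pm2' ≠ 0)
    (hΔ : (pm2 - pm2' + qm1 * qm1') ^ 2 + 4 * qm1' * qm1 * pm2' ≠ 0)
    (τ : ℂ)
    (hτ : qm1' * τ ^ 2 + (pm2 - pm2' + qm1 * qm1') * τ - qm1 * pm2' = 0) :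
    (pm2 + qm1 * qm1' + qm1' * τ) ^ 2 ≠ pm2 * pm2' := by
  intro h
  have hD : pm2 + qm1 * qm1' + qm1' * τ ≠ 0 := by
    intro h0
    exact hp (by rw [← h, h0]; ring)
  have hmul : (pm2 + qm1 * qm1' + qm1' * τ) *
      (2 * (pm2 + qm1 * qm1' + qm1' * τ) - (pm2 + pm2' + qm1 * qm1')) = 0 := by
    linear_combination qm1' * hτ + h
  have hdouble := (mul_eq_zero.mp hmul).resolve_left hD
  apply hΔ
  linear_combination 4 * h - (2 * (pm2 + qm1 * qm1' + qm1' * τ) +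
    (pm2 + pm2' + qm1 * qm1')) * hdouble
end

section
/- Let p₋₂, p₋₂', q₋₁, q₋₁' be complex numbers, set Δ := (p₋₂ − p₋₂' + q₋₁·q₋₁')² + 4·q₋₁'·q₋₁·p₋₂'. If τ ∈ ℂ satisfies the quadratic equation q₋₁'·τ² + (p₋₂ − p₋₂' + q₋₁·q₋₁')·τ − q₋₁·p₋₂' = 0, then, setting z := (p₋₂ + q₋₁·q₋₁' + q₋₁'·τ)² − p₋₂·p₋₂', the identity (2z − Δ)² = Δ·(p₋₂ + p₋₂' + q₋₁·q₋₁')² holds. -/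
/-- The identity `(2z − Δ)² = Δ(p₋₂ + p₋₂' + q₋₁q₋₁')²` for a root `τ` of the
D̃₂₁ quadratic, where `z = (p₋₂ + q₋₁q₋₁' + q₋₁'τ)² − p₋₂p₋₂'` and `Δ` is the
discriminant. -/
theorem stmt15 (pm2 pm2' qm1 qm1' : ℂ) (τ : ℂ)
    (hτ : qm1' * τ ^ 2 + (pm2 - pm2' + qm1 * qm1') * τ - qm1 * pm2' = 0) :
    (2 * ((pm2 + qm1 * qm1' + qm1' * τ) ^ 2 - pm2 * pm2')
        - ((pm2 - pm2' + qm1 * qm1') ^ 2 + 4 * qm1' * qm1 * pm2')) ^ 2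
      = ((pm2 - pm2' + qm1 * qm1') ^ 2 + 4 * qm1' * qm1 * pm2')
        * (pm2 + pm2' + qm1 * qm1') ^ 2 := by
  have hΔ : (2 * (qm1' * τ) + (pm2 - pm2' + qm1 * qm1')) ^ 2
      = (pm2 - pm2' + qm1 * qm1') ^ 2 + 4 * qm1' * qm1 * pm2' := by
    linear_combination 4 * qm1' * hτ
  have hz : 2 * ((pm2 + qm1 * qm1' + qm1' * τ) ^ 2 - pm2 * pm2')
        - ((pm2 - pm2' + qm1 * qm1') ^ 2 + 4 * qm1' * qm1 * pm2')
      = (2 * (qm1' * τ) + (pm2 - pm2' + qm1 * qm1')) * (pm2 + pm2' + qm1 * qm1') := by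
    linear_combination 2 * qm1' * hτ
  rw [hz, mul_pow, hΔ]
end
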